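/- arXiv:1606.06935 — 3 statements merged into one kernel-verified Lean document; each statement's English description precedes it below -/
import Mathlib

section
/- The sequence (ΔM(n))_{n ≥ 0}, where ΔM(n) = M(n+1) − M(n), is 2-automatic, i.e., its 2-kernel {(ΔM(2^e n + c))_{n≥0} : e ≥ 0, 0 ≤ c < 2^e} is a finite set of sequences. -/
/-- The partial sum `Σ_w(i, n) = w(i) + w(i+1) + ⋯ + w(i+n−1)`. -/
def pSum (w : ℕ → ℤ) (i n : ℕ) : ℤ := ∑ j ∈ Finset.range n, w (i + j)

/-- The 2-kernel of an integer sequence `f`: the set of subsequences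
`(f(2^e n + c))_{n ≥ 0}` with `e ≥ 0` and `0 ≤ c < 2^e`. -/
def kernel2 (f : ℕ → ℤ) : Set (ℕ → ℤ) :=
  {g | ∃ e c : ℕ, c < 2 ^ e ∧ g = fun n => f (2 ^ e * n + c)}

/-!
Sums of the Rudin–Shapiro sequence over aligned blocks of length `4` are twice a single term:
`∑_{a < 4} r (4 * n + a) = 2 * r n`. Rounding the endpoints of a window of length `4 * n + c` down
to multiples of `4` therefore doubles a sum over a window of length `n` or `n + 1`, up to a bounded
error which depends only on the automaton states of the two rounded endpoints. Because errors are
halved on the way down, windows that are optimal up to a suitable constant `K` come from windows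
that are again optimal up to `K`. So the set of pairs of end states of the `K`-optimal windows of
lengths `n` and `n + 1`, together with their defects from `M n`, takes finitely many values, is
determined at `4 * n + c` by its value at `n`, and determines `M (n + 1) - M n`.

The argument applies to every 2-automatic sequence whose sums over the aligned blocks of some length
`2 ^ p > 1` are a constant multiple `μ > 1` of a single term.
-/

open Function Set

section Kernel

variable {α : Type*}

/-- `D` is the run of a deterministic automaton reading base-`b` digits, most significant digit
first: appending a digit `c` to `n` changes the state `D n` in a way that depends only on `D n`
and `c`. -/
def DigitStable (b : ℕ) (D : ℕ → α) : Prop :=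
  ∀ c < b, FactorsThrough (fun n => D (b * n + c)) D

lemma DigitStable.pow {b : ℕ} {D : ℕ → α} (hD : DigitStable b D) (k : ℕ) :
    DigitStable (b ^ k) D := by
  induction k with
  | zero =>
    intro c hc n m h
    obtain rfl : c = 0 := by simpa using hc
    simpa using h
  | succ k ih =>
    intro c hc n m h
    have hb : 0 < b := Nat.pos_of_ne_zero (by rintro rfl; simp at hc)
    have split_last (n : ℕ) : b ^ (k + 1) * n + c = b * (b ^ k * n + c / b) + c % b := by
      conv_lhs => rw [← Nat.div_add_mod c b]
      ring
    simp only [split_last]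
    exact hD _ (Nat.mod_lt _ hb) (ih _ (Nat.div_lt_of_lt_mul (by rwa [← pow_succ'])) h)

lemma finite_setOf_factorsThrough {β γ : Type*} {D : α → β} (hD : (range D).Finite)
    {V : Set γ} (hV : V.Finite) :
    {g : α → γ | g.FactorsThrough D ∧ ∀ x, g x ∈ V}.Finite := by
  have : Finite (range D) := hD
  have hfun : {h : range D → γ | ∀ y, h y ∈ V}.Finite := Set.Finite.pi' fun _ => hV
  refine (hfun.image fun h x => h (rangeFactorization D x)).subset ?_
  rintro g ⟨hg, hgV⟩
  refine ⟨fun y => g (rangeSplitting D y), fun _ => hgV _, funext fun x => hg ?_⟩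
  exact apply_rangeSplitting D (rangeFactorization D x)

/-- An exponent `e = p * k + s` is split so that the `p * k` low digits are absorbed by the
stability of `D`; the finitely many values `D (2 ^ s * n + d)` then serve as the state. -/
theorem finite_kernel2_of_digitStable {p : ℕ} (hp : p ≠ 0) {D : ℕ → α}
    (hfin : (range D).Finite) (hD : DigitStable (2 ^ p) D) {f : ℕ → ℤ}
    (hf : f.FactorsThrough D) : (kernel2 f).Finite := by
  let E (n : ℕ) (q : Fin p × Fin (2 ^ p)) : α := D (2 ^ (q.1 : ℕ) * n + q.2)
  have hE : (range E).Finite :=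
    (Set.Finite.pi' fun _ => hfin).subset (by rintro _ ⟨n, rfl⟩ q; exact mem_range_self _)
  have hrange : (range f).Finite := by
    obtain ⟨F, rfl⟩ := (factorsThrough_iff f).1 hf
    exact range_comp F D ▸ hfin.image F
  refine (finite_setOf_factorsThrough hE hrange).subset ?_
  rintro _ ⟨e, c, hc, rfl⟩
  refine ⟨fun n m h => ?_, fun n => mem_range_self _⟩
  obtain ⟨k, s, hs, rfl⟩ : ∃ k s, s < p ∧ e = p * k + s :=
    ⟨e / p, e % p, Nat.mod_lt _ (Nat.pos_of_ne_zero hp), (Nat.div_add_mod e p).symm⟩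
  rw [pow_add, pow_mul] at hc
  have hd : c / (2 ^ p) ^ k < 2 ^ p :=
    (Nat.div_lt_of_lt_mul hc).trans_le (Nat.pow_le_pow_right two_pos hs.le)
  have split_low (n : ℕ) : 2 ^ (p * k + s) * n + c =
      (2 ^ p) ^ k * (2 ^ s * n + c / (2 ^ p) ^ k) + c % (2 ^ p) ^ k := by
    conv_lhs => rw [← Nat.div_add_mod c ((2 ^ p) ^ k)]
    ring
  simp only [split_low]
  exact hf (hD.pow k _ (Nat.mod_lt _ (by positivity)) (congrFun h (⟨s, hs⟩, ⟨_, hd⟩)))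

lemma self_mem_kernel2 (f : ℕ → ℤ) : f ∈ kernel2 f := ⟨0, 0, by simp, by simp⟩

lemma comp_two_mul_add_mem_kernel2 {f g : ℕ → ℤ} (hg : g ∈ kernel2 f) {d : ℕ} (hd : d < 2) :
    (fun n => g (2 * n + d)) ∈ kernel2 f := by
  obtain ⟨e, c, hc, rfl⟩ := hg
  refine ⟨e + 1, 2 ^ e * d + c, ?_, funext fun n => congrArg f (by ring)⟩
  calc 2 ^ e * d + c < 2 ^ e * d + 2 ^ e := by gcongr
    _ = 2 ^ e * (d + 1) := by ring
    _ ≤ 2 ^ (e + 1) := by rw [pow_succ]; gcongr; exact hd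

lemma kernel2_subset {K : Set (ℕ → ℤ)} (heven : ∀ g ∈ K, (fun n => g (2 * n)) ∈ K)
    (hodd : ∀ g ∈ K, (fun n => g (2 * n + 1)) ∈ K) {f : ℕ → ℤ} (hf : f ∈ K) :
    kernel2 f ⊆ K := by
  rintro _ ⟨e, c, hc, rfl⟩
  induction e generalizing f c with
  | zero =>
    obtain rfl : c = 0 := by simpa using hc
    simpa using hf
  | succ e ih =>
    rw [pow_succ'] at hc
    obtain ⟨d, rfl | rfl⟩ := Nat.even_or_odd' c
    · simpa only [mul_add, ← mul_assoc, ← pow_succ'] using ih (heven f hf) d (by lia)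
    · simpa only [mul_add, ← mul_assoc, ← pow_succ', ← add_assoc] using
        ih (hodd f hf) d (by lia)

lemma finite_range_of_finite_kernel2 {f : ℕ → ℤ} (hf : (kernel2 f).Finite) :
    (range f).Finite := by
  refine (hf.image fun g => g 0).subset ?_
  rintro _ ⟨c, rfl⟩
  exact ⟨fun n => f (2 ^ c * n + c), ⟨c, c, Nat.lt_two_pow_self, rfl⟩, by simp⟩

/-- The canonical automaton state of a sequence `f` at `n`: the values at `n` of all sequences in
the 2-kernel of `f`. -/
def kernelState (f : ℕ → ℤ) (n : ℕ) (g : kernel2 f) : ℤ := g.1 n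

lemma digitStable_kernelState (f : ℕ → ℤ) : DigitStable 2 (kernelState f) :=
  fun _ hc _ _ h => funext fun g => congrFun h ⟨_, comp_two_mul_add_mem_kernel2 g.2 hc⟩

lemma factorsThrough_kernelState (f : ℕ → ℤ) : f.FactorsThrough (kernelState f) :=
  fun _ _ h => congrFun h ⟨f, self_mem_kernel2 f⟩

lemma finite_range_kernelState {f : ℕ → ℤ} (hf : (kernel2 f).Finite) :
    (range (kernelState f)).Finite := by
  have : Finite (kernel2 f) := hf
  refine (Set.Finite.pi' fun _ => finite_range_of_finite_kernel2 hf).subset ?_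
  rintro _ ⟨n, rfl⟩ ⟨_, e, c, -, rfl⟩
  exact mem_range_self _

end Kernel

section PartialSum

variable {α : Type*} {w : ℕ → ℤ} {B : ℤ}

lemma pSum_one (w : ℕ → ℤ) (i : ℕ) : pSum w i 1 = w i := by simp [pSum]

lemma pSum_add (w : ℕ → ℤ) (i m n : ℕ) : pSum w i (m + n) = pSum w i m + pSum w (i + m) n := by
  simp only [pSum, Finset.sum_range_add, add_assoc]

lemma abs_pSum_le (hB : ∀ n, |w n| ≤ B) (i n : ℕ) : |pSum w i n| ≤ n * B := by
  calc |pSum w i n| ≤ ∑ j ∈ Finset.range n, |w (i + j)| := Finset.abs_sum_le_sum_abs _ _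
    _ ≤ ∑ _j ∈ Finset.range n, B := Finset.sum_le_sum fun _ _ => hB _
    _ = n * B := by simp

lemma abs_pSum_le_of_le (hB : ∀ n, |w n| ≤ B) (i : ℕ) {n m : ℕ} (h : n ≤ m) :
    |pSum w i n| ≤ m * B := by
  have hB0 : 0 ≤ B := (abs_nonneg _).trans (hB 0)
  exact (abs_pSum_le hB i n).trans (by gcongr)

lemma DigitStable.pSum_factorsThrough {b : ℕ} {σ : ℕ → α} (hσ : DigitStable b σ)
    (hw : w.FactorsThrough σ) {a : ℕ} (ha : a ≤ b) :
    FactorsThrough (fun n => pSum w (b * n) a) σ := fun _ _ h =>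
  Finset.sum_congr rfl fun j hj => hw (hσ j ((Finset.mem_range.1 hj).trans_le ha) h)

/-- `w` is scaled by `μ` under summation over the aligned blocks of length `b`; this is what makes
its partial sums self-similar. -/
def IsBlockScaled (w : ℕ → ℤ) (b : ℕ) (μ : ℤ) : Prop :=
  ∀ n, pSum w (b * n) b = μ * w n

namespace IsBlockScaled

variable {b : ℕ} {μ : ℤ}

lemma pSum_mul (h : IsBlockScaled w b μ) (i n : ℕ) :
    pSum w (b * i) (b * n) = μ * pSum w i n := by
  induction n with
  | zero => simp [pSum]
  | succ n ih => rw [mul_add_one, pSum_add, ih, ← mul_add, h, pSum_add, pSum_one, mul_add]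

lemma pSum_eq (h : IsBlockScaled w b μ) {i l a d N : ℕ} (hN : a + N = b * l + d) :
    pSum w (b * i + a) N = μ * pSum w i l + pSum w (b * (i + l)) d - pSum w (b * i) a := by
  have hsplit := pSum_add w (b * i) a N
  rw [hN, pSum_add, h.pSum_mul, ← mul_add] at hsplit
  linarith

end IsBlockScaled

/-- `M n` is the largest sum of `w` over a window of length `n`, and this maximum is attained. -/
def IsMaxSum (w M : ℕ → ℤ) : Prop :=
  ∀ n, IsGreatest (range fun i => pSum w i n) (M n)

namespace IsMaxSum

variable {M : ℕ → ℤ}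

lemma pSum_le (hM : IsMaxSum w M) (i n : ℕ) : pSum w i n ≤ M n := (hM n).2 (mem_range_self i)

lemma exists_pSum_eq (hM : IsMaxSum w M) (n : ℕ) : ∃ i, pSum w i n = M n := (hM n).1

lemma pSum_add_le (hM : IsMaxSum w M) (hB : ∀ n, |w n| ≤ B) (i n : ℕ) {δ : ℕ} (hδ : δ ≤ 1) :
    pSum w i (n + δ) ≤ M n + B := by
  have hlast := (abs_le.1 (abs_pSum_le_of_le hB (i + n) hδ)).2
  have := hM.pSum_le i n
  rw [pSum_add]
  push_cast at hlast
  linarith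

lemma le_succ_add (hM : IsMaxSum w M) (hB : ∀ n, |w n| ≤ B) (n : ℕ) : M n ≤ M (n + 1) + B := by
  obtain ⟨i, hi⟩ := hM.exists_pSum_eq n
  have hle := hM.pSum_le i (n + 1)
  rw [pSum_add, hi, pSum_one] at hle
  linarith [(abs_le.1 (hB (i + n))).1]

lemma mul_sub_le (hM : IsMaxSum w M) (hB : ∀ n, |w n| ≤ B) {b : ℕ} {μ : ℤ}
    (hw : IsBlockScaled w b μ) (n : ℕ) {c : ℕ} (hc : c ≤ b) :
    μ * M n - b * B ≤ M (b * n + c) := by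
  obtain ⟨i, hi⟩ := hM.exists_pSum_eq n
  have hle := hM.pSum_le (b * i) (b * n + c)
  rw [pSum_add, hw.pSum_mul, hi] at hle
  linarith [(abs_le.1 (abs_pSum_le_of_le hB (b * i + b * n) hc)).1]

end IsMaxSum

end PartialSum

section Profile

variable {α : Type*} {w : ℕ → ℤ} {σ : ℕ → α} {M : ℕ → ℤ} {b : ℕ} {μ B K : ℤ}

/-- The profile at `n` of the windows of lengths `n + δ` with `δ ≤ 1` whose sum is at least
`M n - K`: the automaton states at both ends, `δ`, and the difference between the sum and `M n`.
Both lengths are needed because the length of a window of length `b * n + c`, once its ends are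
rounded to multiples of `b`, is `b * n` or `b * (n + 1)`. -/
def nearMaxProfile (w : ℕ → ℤ) (σ : ℕ → α) (M : ℕ → ℤ) (K : ℤ) (n : ℕ) : Set (α × α × ℕ × ℤ) :=
  {q | ∃ i δ, δ ≤ 1 ∧ -K ≤ pSum w i (n + δ) - M n ∧
    (σ i, σ (i + (n + δ)), δ, pSum w i (n + δ) - M n) = q}

lemma exists_of_nearMaxProfile_eq {n m i δ : ℕ}
    (h : nearMaxProfile w σ M K n = nearMaxProfile w σ M K m) (hδ : δ ≤ 1)
    (hnear : -K ≤ pSum w i (n + δ) - M n) :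
    ∃ j, σ j = σ i ∧ σ (j + (m + δ)) = σ (i + (n + δ)) ∧
      pSum w j (m + δ) - M m = pSum w i (n + δ) - M n := by
  have hmem : (σ i, σ (i + (n + δ)), δ, pSum w i (n + δ) - M n) ∈ nearMaxProfile w σ M K n :=
    ⟨i, δ, hδ, hnear, rfl⟩
  rw [h] at hmem
  obtain ⟨j, δ', -, -, heq⟩ := hmem
  simp only [Prod.mk.injEq] at heq
  obtain ⟨hleft, hright, rfl, hsum⟩ := heq
  exact ⟨j, hleft, hright, hsum⟩

lemma finite_range_nearMaxProfile (hσ : (range σ).Finite) (hB : ∀ n, |w n| ≤ B)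
    (hM : IsMaxSum w M) : (range (nearMaxProfile w σ M K)).Finite := by
  have hbox : (range σ ×ˢ range σ ×ˢ Iic 1 ×ˢ Icc (-K) B : Set (α × α × ℕ × ℤ)).Finite :=
    hσ.prod (hσ.prod ((finite_Iic 1).prod (finite_Icc (-K) B)))
  refine hbox.finite_subsets.subset ?_
  rintro _ ⟨n, rfl⟩ _ ⟨i, δ, hδ, hnear, rfl⟩
  exact ⟨mem_range_self _, mem_range_self _, hδ, hnear, by linarith [hM.pSum_add_le hB i n hδ]⟩

/-- The three errors `b * B` in `hK` come from the two rounded ends and from `mul_sub_le`; dividing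
`3 * (b * B) + K ≤ 2 * K` by `μ ≥ 2` gives back `K`. -/
lemma IsMaxSum.nearMax_of_nearMax_mul_add (hM : IsMaxSum w M) (hB : ∀ n, |w n| ≤ B)
    (hw : IsBlockScaled w b μ) (hμ : 1 < μ) (hK : 3 * (b * B) ≤ K) {n c i l a d N : ℕ}
    (hc : c ≤ b) (ha : a ≤ b) (hd : d ≤ b) (hN : a + N = b * l + d)
    (hnear : -K ≤ pSum w (b * i + a) N - M (b * n + c)) : -K ≤ pSum w i l - M n := by
  have hstart := (abs_le.1 (abs_pSum_le_of_le hB (b * i) ha)).1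
  have hend := (abs_le.1 (abs_pSum_le_of_le hB (b * (i + l)) hd)).2
  have hmax := hM.mul_sub_le hB hw n hc
  have hbB : 0 ≤ b * B := (abs_nonneg _).trans (abs_pSum_le hB 0 b)
  rw [hw.pSum_eq hN] at hnear
  have hscaled : μ * -K ≤ μ * (pSum w i l - M n) := by
    calc μ * -K ≤ -2 * K := by nlinarith
      _ ≤ μ * (pSum w i l - M n) := by linarith
  exact le_of_mul_le_mul_left hscaled (by linarith)

/-- The window is rounded to one of length `n + δ`, exchanged there for a window with the same
profile entry, and extended again by the same end digits. -/
lemma IsMaxSum.exists_window_of_nearMaxProfile_eq (hM : IsMaxSum w M) (hB : ∀ n, |w n| ≤ B)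
    (hw : IsBlockScaled w b μ) (hμ : 1 < μ) (hσ : DigitStable b σ) (hwσ : w.FactorsThrough σ)
    (hK : 3 * (b * B) ≤ K) {n m c i ε : ℕ} (hc : c < b) (hε : ε ≤ 1)
    (h : nearMaxProfile w σ M K n = nearMaxProfile w σ M K m)
    (hnear : -K ≤ pSum w i (b * n + c + ε) - M (b * n + c)) :
    ∃ j, σ j = σ i ∧ σ (j + (b * m + c + ε)) = σ (i + (b * n + c + ε)) ∧
      pSum w j (b * m + c + ε) - μ * M m = pSum w i (b * n + c + ε) - μ * M n := by
  have hb : 0 < b := by lia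
  obtain ⟨i, a, ha, rfl⟩ : ∃ i' a, a < b ∧ i = b * i' + a :=
    ⟨i / b, i % b, Nat.mod_lt _ hb, (Nat.div_add_mod i b).symm⟩
  obtain ⟨δ, d, hδ, hd, hcarry⟩ : ∃ δ d, δ ≤ 1 ∧ d < b ∧ a + c + ε = b * δ + d :=
    ⟨(a + c + ε) / b, (a + c + ε) % b, Nat.lt_succ_iff.1 (Nat.div_lt_of_lt_mul (by lia)),
      Nat.mod_lt _ hb, (Nat.div_add_mod _ b).symm⟩
  have hlen (n : ℕ) : a + (b * n + c + ε) = b * (n + δ) + d := by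
    rw [mul_add]
    lia
  have hend (i n : ℕ) : b * i + a + (b * n + c + ε) = b * (i + (n + δ)) + d := by
    rw [add_assoc, hlen, mul_add b i, add_assoc]
  have hnear' : -K ≤ pSum w i (n + δ) - M n :=
    hM.nearMax_of_nearMax_mul_add hB hw hμ hK hc.le ha.le hd.le (hlen n) hnear
  obtain ⟨j, hleft, hright, hsum⟩ := exists_of_nearMaxProfile_eq h hδ hnear'
  refine ⟨b * j + a, hσ a ha hleft, ?_, ?_⟩
  · simpa only [hend] using hσ d hd hright
  · have hstart : pSum w (b * j) a = pSum w (b * i) a :=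
      hσ.pSum_factorsThrough hwσ ha.le hleft
    have htail : pSum w (b * (j + (m + δ))) d = pSum w (b * (i + (n + δ))) d :=
      hσ.pSum_factorsThrough hwσ hd.le hright
    rw [hw.pSum_eq (hlen m), hw.pSum_eq (hlen n), hstart, htail]
    linear_combination μ * hsum

lemma IsMaxSum.mul_add_sub_factorsThrough (hM : IsMaxSum w M) (hB : ∀ n, |w n| ≤ B)
    (hw : IsBlockScaled w b μ) (hμ : 1 < μ) (hσ : DigitStable b σ) (hwσ : w.FactorsThrough σ)
    (hK : 3 * (b * B) ≤ K) {c : ℕ} (hc : c < b) :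
    FactorsThrough (fun n => M (b * n + c) - μ * M n) (nearMaxProfile w σ M K) := by
  have hbB : 0 ≤ b * B := (abs_nonneg _).trans (abs_pSum_le hB 0 b)
  suffices hle : ∀ n m, nearMaxProfile w σ M K n = nearMaxProfile w σ M K m →
      M (b * n + c) - μ * M n ≤ M (b * m + c) - μ * M m from
    fun n m h => (hle n m h).antisymm (hle m n h.symm)
  intro n m h
  obtain ⟨i, hi⟩ := hM.exists_pSum_eq (b * n + c)
  obtain ⟨j, -, -, hj⟩ := hM.exists_window_of_nearMaxProfile_eq hB hw hμ hσ hwσ hK (i := i) hc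
    zero_le_one h (by rw [add_zero, hi]; linarith)
  rw [add_zero, add_zero, hi] at hj
  linarith [hM.pSum_le j (b * m + c)]

lemma IsMaxSum.digitStable_nearMaxProfile (hM : IsMaxSum w M) (hB : ∀ n, |w n| ≤ B)
    (hw : IsBlockScaled w b μ) (hμ : 1 < μ) (hσ : DigitStable b σ) (hwσ : w.FactorsThrough σ)
    (hK : 3 * (b * B) ≤ K) : DigitStable b (nearMaxProfile w σ M K) := by
  intro c hc
  suffices hsub : ∀ n m, nearMaxProfile w σ M K n = nearMaxProfile w σ M K m →
      nearMaxProfile w σ M K (b * n + c) ⊆ nearMaxProfile w σ M K (b * m + c) from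
    fun n m h => (hsub n m h).antisymm (hsub m n h.symm)
  rintro n m h _ ⟨i, ε, hε, hnear, rfl⟩
  obtain ⟨j, hleft, hright, hsum⟩ :=
    hM.exists_window_of_nearMaxProfile_eq hB hw hμ hσ hwσ hK hc hε h hnear
  have hmax : M (b * n + c) - μ * M n = M (b * m + c) - μ * M m :=
    hM.mul_add_sub_factorsThrough hB hw hμ hσ hwσ hK hc h
  have hdefect : pSum w j (b * m + c + ε) - M (b * m + c) =
      pSum w i (b * n + c + ε) - M (b * n + c) := by
    linarith
  exact ⟨j, ε, hε, hdefect ▸ hnear, by rw [hleft, hright, hdefect]⟩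

lemma IsMaxSum.succ_sub_factorsThrough (hM : IsMaxSum w M) (hB : ∀ n, |w n| ≤ B) (hK : B ≤ K) :
    FactorsThrough (fun n => M (n + 1) - M n) (nearMaxProfile w σ M K) := by
  suffices hle : ∀ n m, nearMaxProfile w σ M K n = nearMaxProfile w σ M K m →
      M (n + 1) - M n ≤ M (m + 1) - M m from
    fun n m h => (hle n m h).antisymm (hle m n h.symm)
  intro n m h
  obtain ⟨i, hi⟩ := hM.exists_pSum_eq (n + 1)
  obtain ⟨j, -, -, hj⟩ := exists_of_nearMaxProfile_eq (i := i) h le_rfl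
    (by linarith [hM.le_succ_add hB n])
  linarith [hM.pSum_le j (m + 1)]

end Profile

theorem delta_max_sum_two_automatic_general {w M : ℕ → ℤ} {p : ℕ} {μ : ℤ}
    (hker : (kernel2 w).Finite) (hp : p ≠ 0) (hμ : 1 < μ) (hw : IsBlockScaled w (2 ^ p) μ)
    (hM : IsMaxSum w M) : (kernel2 fun n => M (n + 1) - M n).Finite := by
  obtain ⟨B, hB⟩ : ∃ B, ∀ n, |w n| ≤ B := by
    obtain ⟨B, hB⟩ := ((finite_range_of_finite_kernel2 hker).image abs).bddAbove
    exact ⟨B, fun n => hB (mem_image_of_mem abs (mem_range_self n))⟩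
  have hBK : B ≤ 3 * ((2 ^ p : ℕ) * B) := by
    have hB0 : 0 ≤ B := (abs_nonneg _).trans (hB 0)
    have : (1 : ℤ) ≤ (2 ^ p : ℕ) := mod_cast Nat.one_le_two_pow
    nlinarith
  exact finite_kernel2_of_digitStable hp
    (finite_range_nearMaxProfile (finite_range_kernelState hker) hB hM)
    (hM.digitStable_nearMaxProfile hB hw hμ ((digitStable_kernelState w).pow p)
      (factorsThrough_kernelState w) le_rfl)
    (hM.succ_sub_factorsThrough hB hBK)

section RudinShapiro

variable {r : ℕ → ℤ}

lemma finite_kernel2_rudinShapiro (hre : ∀ n, r (2 * n) = r n)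
    (hro : ∀ n, r (2 * n + 1) = (-1) ^ n * r n) : (kernel2 r).Finite := by
  let s (n : ℕ) : ℤ := (-1) ^ n * r n
  have hrs (n : ℕ) : r (2 * n + 1) = s n := hro n
  have hse (n : ℕ) : s (2 * n) = r n := by simp [s, hre]
  have hso (n : ℕ) : s (2 * n + 1) = -s n := by simp [s, hro, pow_succ]
  refine (toFinite {r, -r, s, -s}).subset (kernel2_subset ?_ ?_ (by simp))
  · rintro g (rfl | rfl | rfl | rfl) <;> simp [hre, hse, Pi.neg_def]
  · rintro g (rfl | rfl | rfl | rfl) <;> simp [hrs, hso, Pi.neg_def]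

lemma isBlockScaled_rudinShapiro (hre : ∀ n, r (2 * n) = r n)
    (hro : ∀ n, r (2 * n + 1) = (-1) ^ n * r n) : IsBlockScaled r (2 ^ 2) 2 := by
  intro n
  have h0 : r (4 * n) = r n := by rw [show 4 * n = 2 * (2 * n) by ring, hre, hre]
  have h1 : r (4 * n + 1) = r n := by
    rw [show 4 * n + 1 = 2 * (2 * n) + 1 by ring, hro, hre]
    simp
  have h2 : r (4 * n + 2) = (-1) ^ n * r n := by
    rw [show 4 * n + 2 = 2 * (2 * n + 1) by ring, hre, hro]
  have h3 : r (4 * n + 3) = -((-1) ^ n * r n) := by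
    rw [show 4 * n + 3 = 2 * (2 * n + 1) + 1 by ring, hro, hro]
    simp [pow_succ]
  norm_num [pSum, Finset.sum_range_succ, h0, h1, h2, h3]
  ring

end RudinShapiro

/-- The difference sequence `ΔM(n) = M(n+1) − M(n)` of the
maximal sums of the Rudin–Shapiro sequence is 2-automatic: its 2-kernel is a
finite set of sequences. -/
theorem delta_max_sum_two_automatic
    (r : ℕ → ℤ) (hr0 : r 0 = 1)
    (hre : ∀ n, r (2 * n) = r n)
    (hro : ∀ n, r (2 * n + 1) = (-1) ^ n * r n)
    (M : ℕ → ℤ)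
    (hM : ∀ n, IsGreatest (Set.range fun i => pSum r i n) (M n)) :
    (kernel2 fun n => M (n + 1) - M n).Finite :=
  delta_max_sum_two_automatic_general (finite_kernel2_rudinShapiro hre hro) two_ne_zero
    one_lt_two (isBlockScaled_rudinShapiro hre hro) hM
end

section
/- For every n ≥ 1, the abelian complexity of the Rudin-Shapiro sequence r equals the abelian complexity of the related sequence r': ρ_r(n) = ρ_{r'}(n). -/
/-- The Parikh (abelianization) vector of the factor of `w` of length `n`
starting at position `i`. -/
def parikh (w : ℕ → ℤ) (n i : ℕ) : ℤ → ℕ :=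
  fun a => ((Finset.range n).filter fun j => w (i + j) = a).card

/-- The abelian complexity of `w`: the number of abelian equivalence classes
of factors of `w` of length `n`. -/
noncomputable def abelianComplexity (w : ℕ → ℤ) (n : ℕ) : ℕ :=
  (Set.range (parikh w n)).ncard

/-!
For `n < 2 ^ k`, the letter of `r` at the mirror image of `n` in `[0, 2 ^ (k + 1))` is
`(-1) ^ (k + n) * r n`. For even `k` this is `r' n`, so the reversal of every prefix of `r'` is a
factor of `r`. A position and its mirror image have opposite parity, so for odd `k` the same
identity says that the letter of `r'` at the mirror image of `n` is `r n`, and the reversal of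
every prefix of `r` is a factor of `r'`. Since each factor lies in a prefix and reversal preserves
letter counts, `r` and `r'` have the same Parikh vectors in every length.
-/

/-- The reversal of every prefix of `w` is a factor of `v`. The letters `w j` and `v (s + k)`
are matched through `j + k + 1 = N` rather than `k = N - 1 - j`, to avoid truncated subtraction. -/
def ReversedPrefixesOccurIn {α : Type*} (w v : ℕ → α) : Prop :=
  ∀ N, ∃ s, ∀ j k, j + k + 1 = N → w j = v (s + k)

theorem parikh_eq_of_reverse {w v : ℕ → ℤ} {n i s : ℕ}
    (h : ∀ j k, j + k + 1 = n → w (i + j) = v (s + k)) : parikh w n i = parikh v n s := by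
  ext a
  simp only [parikh, Finset.card_filter]
  rw [← Finset.sum_range_reflect (fun k => if v (s + k) = a then 1 else 0)]
  refine Finset.sum_congr rfl fun j hj => ?_
  have hjn : j < n := Finset.mem_range.mp hj
  rw [h j (n - 1 - j) (by omega)]

theorem ReversedPrefixesOccurIn.range_parikh_subset {w v : ℕ → ℤ}
    (h : ReversedPrefixesOccurIn w v) (n : ℕ) :
    Set.range (parikh w n) ⊆ Set.range (parikh v n) := by
  rintro _ ⟨i, rfl⟩
  obtain ⟨s, hs⟩ := h (i + n)
  exact ⟨s, (parikh_eq_of_reverse fun j k hjk => hs (i + j) k (by omega)).symm⟩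

theorem ReversedPrefixesOccurIn.abelianComplexity_eq {w v : ℕ → ℤ}
    (hwv : ReversedPrefixesOccurIn w v) (hvw : ReversedPrefixesOccurIn v w) (n : ℕ) :
    abelianComplexity w n = abelianComplexity v n :=
  congrArg Set.ncard ((hwv.range_parikh_subset n).antisymm (hvw.range_parikh_subset n))

theorem odd_add_of_add_add_one_eq_two_pow_succ {a b k : ℕ} (h : a + b + 1 = 2 ^ (k + 1)) :
    Odd (a + b) :=
  ⟨2 ^ k - 1, by omega⟩

/-- The Rudin–Shapiro recurrences, which determine `r` from its initial value `r 0`. The values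
may lie in any monoid with a sign, since only left multiplication by powers of `-1` occurs. -/
structure RudinShapiroRec {R : Type*} [Monoid R] [HasDistribNeg R] (r : ℕ → R) : Prop where
  even (n : ℕ) : r (2 * n) = r n
  odd (n : ℕ) : r (2 * n + 1) = (-1) ^ n * r n

namespace RudinShapiroRec

variable {R : Type*} [Monoid R] [HasDistribNeg R] {r : ℕ → R}

theorem apply_reflect (h : RudinShapiroRec r) {k n m : ℕ} (hn : n < 2 ^ k)
    (hnm : n + m + 1 = 2 ^ (k + 1)) : r m = (-1) ^ (k + n) * r n := by
  induction k generalizing n m with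
  | zero =>
    obtain ⟨rfl, rfl⟩ : n = 0 ∧ m = 2 * 0 + 1 := by omega
    exact h.odd 0
  | succ k ih =>
    obtain ⟨a, rfl | rfl⟩ := n.even_or_odd'
    · obtain ⟨b, rfl⟩ : ∃ b, m = 2 * b + 1 := ⟨m / 2, by omega⟩
      have hab : a + b + 1 = 2 ^ (k + 1) := by omega
      have hsign : (-1 : R) ^ (b + (k + a)) = (-1) ^ (k + 1 + 2 * a) :=
        neg_one_pow_congr (by grind [odd_add_of_add_add_one_eq_two_pow_succ hab])
      rw [h.odd, h.even, ih (by omega) hab, ← mul_assoc, ← pow_add, hsign]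
    · obtain ⟨b, rfl⟩ : ∃ b, m = 2 * b := ⟨m / 2, by omega⟩
      have hab : a + b + 1 = 2 ^ (k + 1) := by omega
      have hsign : (-1 : R) ^ (k + a) = (-1) ^ (k + 1 + (2 * a + 1) + a) :=
        neg_one_pow_congr (by grind)
      rw [h.even, h.odd, ih (by omega) hab, ← mul_assoc, ← pow_add, hsign]

theorem reversedPrefixesOccurIn_twist (h : RudinShapiroRec r) :
    ReversedPrefixesOccurIn r (fun n => (-1) ^ n * r n) := by
  intro N
  have hN : 2 * N + 1 < 2 ^ (2 * N + 1) := Nat.lt_two_pow_self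
  refine ⟨2 ^ (2 * N + 1 + 1) - N, fun j k hjk => ?_⟩
  set m := 2 ^ (2 * N + 1 + 1) - N + k
  have hjm : j + m + 1 = 2 ^ (2 * N + 1 + 1) := by omega
  have hsign : Even (m + (2 * N + 1 + j)) := by
    grind [odd_add_of_add_add_one_eq_two_pow_succ hjm]
  calc
    r j = (-1) ^ (m + (2 * N + 1 + j)) * r j := by rw [hsign.neg_one_pow, one_mul]
    _ = (-1) ^ m * r m := by rw [h.apply_reflect (by omega) hjm, ← mul_assoc, ← pow_add]

theorem twist_reversedPrefixesOccurIn (h : RudinShapiroRec r) :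
    ReversedPrefixesOccurIn (fun n => (-1) ^ n * r n) r := by
  intro N
  have hN : 2 * N < 2 ^ (2 * N) := Nat.lt_two_pow_self
  refine ⟨2 ^ (2 * N + 1) - N, fun j k hjk => ?_⟩
  have hjm : j + (2 ^ (2 * N + 1) - N + k) + 1 = 2 ^ (2 * N + 1) := by omega
  rw [h.apply_reflect (by omega) hjm, pow_add, (even_two_mul N).neg_one_pow, one_mul]

end RudinShapiroRec

/-- For every `n ≥ 1`, the abelian complexity of the
Rudin–Shapiro sequence `r` equals the abelian complexity of the related
sequence `r'(n) = (−1)^n r(n)`. -/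
theorem abelianComplexity_rs_eq_rs'
    (r : ℕ → ℤ) (hr0 : r 0 = 1)
    (hre : ∀ n, r (2 * n) = r n)
    (hro : ∀ n, r (2 * n + 1) = (-1) ^ n * r n)
    (n : ℕ) (hn : 1 ≤ n) :
    abelianComplexity r n = abelianComplexity (fun k => (-1) ^ k * r k) n := by
  have h : RudinShapiroRec r := ⟨hre, hro⟩
  exact h.reversedPrefixesOccurIn_twist.abelianComplexity_eq h.twist_reversedPrefixesOccurIn n
end

section
/- The abelian complexity function (ρ(n))_{n ≥ 0} of the Rudin-Shapiro sequence (with ρ(0) = 1) is 2-regular, i.e., the ℤ-submodule of the module of all integer sequences generated by the 2-kernel {(ρ(2^e n + c))_{n≥0} : e ≥ 0, 0 ≤ c < 2^e} is finitely generated. -/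
/-!
Let `M n` be the largest sum of a factor of length `n` of the Rudin–Shapiro sequence `r`. The sums
of the factors of length `n` have the parity of `n`, change by at most `2` when the window moves by
one, and form a symmetric set because `r (6 * 2 ^ k + x) = -r x` for `x < 2 ^ k`; hence
`ρ n = M n + 1`. The partial sums of `r` at `4 * m + j` are, up to an error of at most one, twice
those at `m` or `m + 1`. This bounds `M (4 * n + j)` in terms of `M n` and `M (n + 1)`, and the
bounds are attained as soon as a maximal factor has the right signs `r (2 * a + 1)`,
`r (2 * b + 1)` at its two ends, a condition that can be carried along the recursion. By the
resulting recurrences for `ρ (4 * n + j)`, the sequence `ρ`, its shift, the constant `1` and the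
indicator of `0` span a ℤ-module closed under `g ↦ g (4 * n + j)`.
-/

section RegularSequences

/-- The decimation `g ↦ (g (a * n + c))ₙ` as a linear map; the 2-kernel of `f` consists of the
sequences `decimate (2 ^ e) c f` with `c < 2 ^ e`. -/
def decimate (a c : ℕ) : (ℕ → ℤ) →ₗ[ℤ] (ℕ → ℤ) :=
  LinearMap.funLeft ℤ ℤ fun n => a * n + c

lemma decimate_apply (a c : ℕ) (g : ℕ → ℤ) (n : ℕ) : decimate a c g n = g (a * n + c) := rfl

lemma decimate_one_zero (g : ℕ → ℤ) : decimate 1 0 g = g := by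
  funext n
  simp [decimate_apply]

lemma decimate_single_zero {a c : ℕ} (hc : c < a) (x : ℤ) :
    decimate a c (Pi.single 0 x) = if c = 0 then Pi.single 0 x else 0 := by
  funext n
  have ha : a ≠ 0 := by omega
  split_ifs with h <;> simp [decimate_apply, Pi.single_apply, h, ha]

lemma decimate_decimate (a b c d : ℕ) (g : ℕ → ℤ) :
    decimate a c (decimate b d g) = decimate (b * a) (b * c + d) g := by
  funext n
  simp only [decimate_apply]
  congr 1
  ring

lemma decimate_pow_mem {N : Submodule ℤ (ℕ → ℤ)} {b : ℕ}
    (hN : ∀ c < b, N ≤ N.comap (decimate b c)) (k : ℕ) {c : ℕ} (hc : c < b ^ k)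
    {g : ℕ → ℤ} (hg : g ∈ N) : decimate (b ^ k) c g ∈ N := by
  induction k generalizing c g with
  | zero =>
    obtain rfl : c = 0 := by simpa using hc
    simpa only [pow_zero, decimate_one_zero] using hg
  | succ k ih =>
    have hb : 0 < b := Nat.pos_of_ne_zero fun hb => by simp [hb] at hc
    rw [pow_succ'] at hc ⊢
    rw [← Nat.div_add_mod c b, ← decimate_decimate]
    exact ih (Nat.div_lt_of_lt_mul hc) (hN _ (Nat.mod_lt c hb) hg)

lemma fg_span_kernel2_of_le_comap {N : Submodule ℤ (ℕ → ℤ)} (hfg : N.FG) {m : ℕ} (hm : 0 < m)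
    (hN : ∀ c < 2 ^ m, N ≤ N.comap (decimate (2 ^ m) c)) {f : ℕ → ℤ} (hf : f ∈ N) :
    (Submodule.span ℤ (kernel2 f)).FG := by
  let L : Submodule ℤ (ℕ → ℤ) :=
    ⨆ p : Fin m × Fin (2 ^ m), N.map (decimate (2 ^ (p.1 : ℕ)) p.2)
  have hL : L.FG := Submodule.fg_iSup _ fun _ => hfg.map _
  refine hL.of_le (Submodule.span_le.mpr ?_)
  rintro _ ⟨e, c, hc, rfl⟩
  set s := e % m
  set b := (2 ^ m) ^ (e / m) with hb
  have hs : s < m := Nat.mod_lt e hm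
  have he : 2 ^ e = b * 2 ^ s := by rw [hb, ← pow_mul, ← pow_add, Nat.div_add_mod]
  have hd : c / b < 2 ^ m :=
    (Nat.div_lt_of_lt_mul (he ▸ hc)).trans (Nat.pow_lt_pow_right one_lt_two hs)
  have hmem : decimate b (c % b) f ∈ N :=
    decimate_pow_mem hN _ (Nat.mod_lt c (by positivity)) hf
  have hdec : decimate (2 ^ s) (c / b) (decimate b (c % b) f) = decimate (2 ^ e) c f := by
    rw [decimate_decimate, Nat.div_add_mod, he]
  exact Submodule.mem_iSup_of_mem (⟨s, hs⟩, ⟨c / b, hd⟩) ⟨_, hmem, hdec⟩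

/-- The module generated by `f`, its shift, the constant sequence `1` and the indicator of `0`; the
last generator absorbs the failure of a recurrence at `0`. -/
def shiftSpan (f : ℕ → ℤ) : Submodule ℤ (ℕ → ℤ) :=
  Submodule.span ℤ {f, decimate 1 1 f, 1, Pi.single 0 1}

/-- The recurrences for `f` on the four residue classes modulo `4` that hold for the abelian
complexity of the Rudin–Shapiro sequence. -/
structure QuadrisectionRecurrence (f : ℕ → ℤ) : Prop where
  four_mul : ∀ n, 0 < n → f (4 * n) = 2 * f n + 1
  four_mul_add_one : ∀ n, f (4 * n + 1) = 2 * f n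
  four_mul_add_two : ∀ n, f (4 * n + 2) = f n + f (n + 1)
  four_mul_add_three : ∀ n, f (4 * n + 3) = 2 * f (n + 1)

namespace QuadrisectionRecurrence

variable {f : ℕ → ℤ}

lemma decimate_four_mem_shiftSpan (h : QuadrisectionRecurrence f) {c : ℕ} (hc : c ≤ 4) :
    decimate 4 c f ∈ shiftSpan f := by
  let f' := decimate 1 1 f
  let δ : ℕ → ℤ := Pi.single 0 1
  have hf : f ∈ shiftSpan f := Submodule.subset_span (by simp)
  have hf' : f' ∈ shiftSpan f := Submodule.subset_span (by simp [f'])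
  have hone : 1 ∈ shiftSpan f := Submodule.subset_span (by simp)
  have hδ : δ ∈ shiftSpan f := Submodule.subset_span (by simp [δ])
  have dec₀ : decimate 4 0 f = (2 : ℤ) • f + 1 - (f 0 + 1) • δ := by
    funext n
    rcases n.eq_zero_or_pos with rfl | hn
    · simp [decimate_apply, δ]
      ring
    · simp [decimate_apply, δ, h.four_mul n hn, hn.ne']
  have dec₁ : decimate 4 1 f = (2 : ℤ) • f := by
    funext n
    simp [decimate_apply, h.four_mul_add_one]
  have dec₂ : decimate 4 2 f = f + f' := by
    funext n
    simp [decimate_apply, f', h.four_mul_add_two]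
  have dec₃ : decimate 4 3 f = (2 : ℤ) • f' := by
    funext n
    simp [decimate_apply, f', h.four_mul_add_three]
  have dec₄ : decimate 4 4 f = (2 : ℤ) • f' + 1 := by
    funext n
    simpa [decimate_apply, f', mul_add] using h.four_mul (n + 1) n.succ_pos
  interval_cases c
  · exact dec₀ ▸ sub_mem (add_mem (Submodule.smul_mem _ _ hf) hone) (Submodule.smul_mem _ _ hδ)
  · exact dec₁ ▸ Submodule.smul_mem _ _ hf
  · exact dec₂ ▸ add_mem hf hf'
  · exact dec₃ ▸ Submodule.smul_mem _ _ hf'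
  · exact dec₄ ▸ add_mem (Submodule.smul_mem _ _ hf') hone

lemma shiftSpan_le_comap_decimate_four (h : QuadrisectionRecurrence f) {c : ℕ} (hc : c < 4) :
    shiftSpan f ≤ (shiftSpan f).comap (decimate 4 c) := by
  refine Submodule.span_le.mpr ?_
  rintro g (rfl | rfl | rfl | rfl)
  · exact h.decimate_four_mem_shiftSpan hc.le
  · rw [SetLike.mem_coe, Submodule.mem_comap, decimate_decimate, one_mul, one_mul]
    exact h.decimate_four_mem_shiftSpan hc
  · have hone : decimate 4 c 1 = 1 := rfl
    rw [SetLike.mem_coe, Submodule.mem_comap, hone]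
    exact Submodule.subset_span (by simp)
  · rw [SetLike.mem_coe, Submodule.mem_comap, decimate_single_zero hc]
    split_ifs
    exacts [Submodule.subset_span (by simp), zero_mem _]

theorem fg_span_kernel2 (h : QuadrisectionRecurrence f) : (Submodule.span ℤ (kernel2 f)).FG :=
  fg_span_kernel2_of_le_comap (m := 2) (Submodule.fg_span (Set.toFinite _)) two_pos
    (fun _ hc => h.shiftSpan_le_comap_decimate_four hc) (Submodule.subset_span (by simp))

end QuadrisectionRecurrence

end RegularSequences

section FactorSums

variable {A : Type*}

/-- The sum of the first `n` terms of `w`. -/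
def partialSum [AddCommMonoid A] (w : ℕ → A) (n : ℕ) : A :=
  ∑ j ∈ Finset.range n, w j

/-- The sum of the factor of `w` of length `n` starting at position `i`; the arguments are ordered
as for `parikh`. -/
def factorSum [AddCommMonoid A] (w : ℕ → A) (n i : ℕ) : A :=
  ∑ j ∈ Finset.range n, w (i + j)

lemma partialSum_succ [AddCommMonoid A] (w : ℕ → A) (n : ℕ) :
    partialSum w (n + 1) = partialSum w n + w n :=
  Finset.sum_range_succ w n

lemma factorSum_succ [AddCommMonoid A] (w : ℕ → A) (n i : ℕ) :
    factorSum w (n + 1) i = factorSum w n i + w (i + n) :=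
  Finset.sum_range_succ _ n

lemma factorSum_succ' [AddCommMonoid A] (w : ℕ → A) (n i : ℕ) :
    factorSum w (n + 1) i = factorSum w n (i + 1) + w i := by
  simp only [factorSum, Finset.sum_range_succ', add_zero, add_right_comm i, add_assoc i]

lemma factorSum_eq_sub [AddCommGroup A] (w : ℕ → A) (n i : ℕ) :
    factorSum w n i = partialSum w (i + n) - partialSum w i := by
  rw [factorSum, partialSum, Finset.sum_range_add, partialSum, add_sub_cancel_left]

end FactorSums

lemma mem_range_of_abs_sub_le_one {f : ℕ → ℤ} (hf : ∀ i, |f (i + 1) - f i| ≤ 1) {a b : ℕ} {y : ℤ}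
    (ha : f a ≤ y) (hb : y ≤ f b) : y ∈ Set.range f := by
  by_contra hy
  have hne (i : ℕ) : f i ≠ y := fun h => hy ⟨i, h⟩
  have side (i : ℕ) : f i < y ↔ f 0 < y := by
    induction i with
    | zero => rfl
    | succ i ih =>
      have := abs_le.mp (hf i)
      have := hne i
      have := hne (i + 1)
      omega
  have := side a
  have := side b
  have := hne a
  omega

section SignSequences

variable {w : ℕ → ℤ}

lemma factorSum_add_length (hw : ∀ n, w n = 1 ∨ w n = -1) (n i : ℕ) :
    factorSum w n i + n = 2 * parikh w n i 1 := by
  have hletter (k : ℕ) : w k + 1 = 2 * if w k = 1 then 1 else 0 := by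
    rcases hw k with h | h <;> simp [h]
  calc factorSum w n i + n = ∑ j ∈ Finset.range n, (w (i + j) + 1) := by
        simp [factorSum, Finset.sum_add_distrib]
    _ = 2 * parikh w n i 1 := by
        simp only [hletter, ← Finset.mul_sum, Finset.sum_boole, parikh]

lemma parikh_one_add_parikh_neg_one (hw : ∀ n, w n = 1 ∨ w n = -1) (n i : ℕ) :
    parikh w n i 1 + parikh w n i (-1) = n := by
  have hneg (k : ℕ) : w k = -1 ↔ ¬w k = 1 := by
    rcases hw k with h | h <;> simp [h]
  simp only [parikh, hneg, Finset.card_filter_add_card_filter_not, Finset.card_range]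

lemma parikh_eq_zero (hw : ∀ n, w n = 1 ∨ w n = -1) {a : ℤ} (h₁ : a ≠ 1) (h₂ : a ≠ -1) (n i : ℕ) :
    parikh w n i a = 0 := by
  refine Finset.card_eq_zero.mpr (Finset.filter_eq_empty_iff.mpr fun j _ h => ?_)
  rcases hw (i + j) with h' | h' <;> omega

lemma parikh_eq_parikh_of_one (hw : ∀ n, w n = 1 ∨ w n = -1) {n i j : ℕ}
    (h : parikh w n i 1 = parikh w n j 1) : parikh w n i = parikh w n j := by
  funext a
  rcases eq_or_ne a 1 with rfl | h₁
  · exact h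
  rcases eq_or_ne a (-1) with rfl | h₂
  · have := parikh_one_add_parikh_neg_one hw n i
    have := parikh_one_add_parikh_neg_one hw n j
    omega
  · rw [parikh_eq_zero hw h₁ h₂, parikh_eq_zero hw h₁ h₂]

lemma abelianComplexity_eq_ncard_range_parikh_one (hw : ∀ n, w n = 1 ∨ w n = -1) (n : ℕ) :
    abelianComplexity w n = (Set.range fun i => (parikh w n i 1 : ℤ)).ncard := by
  have hinj : Set.InjOn (fun p : ℤ → ℕ => (p 1 : ℤ)) (Set.range (parikh w n)) := by
    rintro _ ⟨i, rfl⟩ _ ⟨j, rfl⟩ h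
    exact parikh_eq_parikh_of_one hw (Int.natCast_inj.mp h)
  rw [abelianComplexity, ← hinj.ncard_image, ← Set.range_comp]
  rfl

lemma abs_parikh_one_succ_sub_le_one (hw : ∀ n, w n = 1 ∨ w n = -1) (n i : ℕ) :
    |(parikh w n (i + 1) 1 : ℤ) - parikh w n i 1| ≤ 1 := by
  have hslide := (factorSum_succ w n i).symm.trans (factorSum_succ' w n i)
  have := factorSum_add_length hw n i
  have := factorSum_add_length hw n (i + 1)
  rw [abs_le]
  rcases hw i with _ | _ <;> rcases hw (i + n) with _ | _ <;> omega

theorem two_mul_abelianComplexity (hw : ∀ n, w n = 1 ∨ w n = -1) {n : ℕ} {M m : ℤ}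
    (hM : IsGreatest (Set.range (factorSum w n)) M) (hm : IsLeast (Set.range (factorSum w n)) m) :
    2 * (abelianComplexity w n : ℤ) = M - m + 2 := by
  obtain ⟨⟨a, ha⟩, hle⟩ := hM
  obtain ⟨⟨b, hb⟩, hge⟩ := hm
  have hsum := factorSum_add_length hw n
  have hrange : Set.range (fun i => (parikh w n i 1 : ℤ)) =
      Finset.Icc (parikh w n b 1 : ℤ) (parikh w n a 1) := by
    ext y
    rw [Finset.coe_Icc, Set.mem_Icc]
    refine ⟨?_, fun ⟨hby, hya⟩ =>
      mem_range_of_abs_sub_le_one (abs_parikh_one_succ_sub_le_one hw n) hby hya⟩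
    rintro ⟨i, rfl⟩
    have := hle ⟨i, rfl⟩
    have := hge ⟨i, rfl⟩
    have := hsum i
    have := hsum a
    have := hsum b
    constructor <;> lia
  have := hsum a
  have := hsum b
  have := hle ⟨b, rfl⟩
  rw [abelianComplexity_eq_ncard_range_parikh_one hw, hrange, Set.ncard_coe_finset, Int.card_Icc]
  omega

lemma abs_factorSum_le (hw : ∀ n, w n = 1 ∨ w n = -1) (n i : ℕ) : |factorSum w n i| ≤ n := by
  have := factorSum_add_length hw n i
  have := parikh_one_add_parikh_neg_one hw n i
  rw [abs_le]
  omega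

lemma factorSum_succ_le_add_one (hw : ∀ n, w n = 1 ∨ w n = -1) (n i : ℕ) :
    factorSum w (n + 1) i ≤ factorSum w n i + 1 := by
  rw [factorSum_succ]
  rcases hw (i + n) with h | h <;> omega

lemma factorSum_le_succ_add_one (hw : ∀ n, w n = 1 ∨ w n = -1) (n i : ℕ) :
    factorSum w n i ≤ factorSum w (n + 1) i + 1 := by
  rw [factorSum_succ]
  rcases hw (i + n) with h | h <;> omega

end SignSequences

lemma abelianComplexity_zero (w : ℕ → ℤ) : abelianComplexity w 0 = 1 := by
  have hconst : parikh w 0 = fun _ _ => 0 := by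
    funext i a
    simp [parikh]
  rw [abelianComplexity, hconst, Set.range_const, Set.ncard_singleton]

/-- The recurrences that characterize the Rudin–Shapiro sequence. -/
structure IsRudinShapiro (r : ℕ → ℤ) : Prop where
  zero : r 0 = 1
  two_mul : ∀ n, r (2 * n) = r n
  two_mul_add_one : ∀ n, r (2 * n + 1) = (-1) ^ n * r n

/-- Some factor of length `n` and sum `v`, occupying the positions from `a + 1` to `b`, has signs
`r (2 * a + 1) = -1` and `r (2 * b + 1) = 1` at its ends. For the Rudin–Shapiro sequence these two
signs make the factor occupying the positions from `4 * a + 3` to `4 * b + 2`, of length `4 * n`,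
have sum `2 * v + 2` rather than only about `2 * v`. -/
def IsLiftable (r : ℕ → ℤ) (n : ℕ) (v : ℤ) : Prop :=
  ∃ a b, b = a + n ∧ partialSum r (b + 1) - partialSum r (a + 1) = v ∧
    r (2 * a + 1) = -1 ∧ r (2 * b + 1) = 1

/-- `v` is the largest sum of a factor of length `n`, and some factor attaining it can be used to
find factors of large sum among those of length about `4 * n`. -/
structure IsLiftableMax (r : ℕ → ℤ) (n : ℕ) (v : ℤ) : Prop where
  factorSum_le : ∀ i, factorSum r n i ≤ v
  isLiftable : IsLiftable r n v

lemma IsLiftable.exists_factorSum_eq {r : ℕ → ℤ} {n : ℕ} {v : ℤ} (h : IsLiftable r n v) :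
    ∃ i, factorSum r n i = v := by
  obtain ⟨a, _, rfl, hv, -, -⟩ := h
  exact ⟨a + 1, by rw [factorSum_eq_sub, add_right_comm, hv]⟩

lemma IsLiftableMax.isGreatest {r : ℕ → ℤ} {n : ℕ} {v : ℤ} (h : IsLiftableMax r n v) :
    IsGreatest (Set.range (factorSum r n)) v :=
  ⟨h.isLiftable.exists_factorSum_eq, Set.forall_mem_range.mpr h.factorSum_le⟩

namespace IsRudinShapiro

variable {r : ℕ → ℤ}

lemma eq_one_or_neg_one (h : IsRudinShapiro r) (n : ℕ) : r n = 1 ∨ r n = -1 := by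
  induction n using Nat.strong_induction_on with
  | _ n ih =>
    rcases n.eq_zero_or_pos with rfl | hn
    · exact Or.inl h.zero
    rcases n.even_or_odd' with ⟨k, rfl | rfl⟩
    · rw [h.two_mul]
      exact ih k (by omega)
    · rw [h.two_mul_add_one]
      rcases ih k (by omega) with hk | hk <;> rcases neg_one_pow_eq_or ℤ k with hs | hs <;>
        simp [hk, hs]

lemma four_mul (h : IsRudinShapiro r) (n : ℕ) : r (4 * n) = r n := by
  rw [show 4 * n = 2 * (2 * n) by ring, h.two_mul, h.two_mul]

lemma four_mul_add_one (h : IsRudinShapiro r) (n : ℕ) : r (4 * n + 1) = r n := by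
  rw [show 4 * n + 1 = 2 * (2 * n) + 1 by ring, h.two_mul_add_one, h.two_mul,
    (even_two_mul n).neg_one_pow, one_mul]

lemma four_mul_add_two (h : IsRudinShapiro r) (n : ℕ) : r (4 * n + 2) = r (2 * n + 1) := by
  rw [show 4 * n + 2 = 2 * (2 * n + 1) by ring, h.two_mul]

lemma four_mul_add_three (h : IsRudinShapiro r) (n : ℕ) : r (4 * n + 3) = -r (2 * n + 1) := by
  rw [show 4 * n + 3 = 2 * (2 * n + 1) + 1 by ring, h.two_mul_add_one,
    (odd_two_mul_add_one n).neg_one_pow, neg_one_mul]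

lemma two_mul_four_mul_add_one (h : IsRudinShapiro r) (n : ℕ) : r (2 * (4 * n) + 1) = r n := by
  rw [show 2 * (4 * n) + 1 = 4 * (2 * n) + 1 by ring, h.four_mul_add_one, h.two_mul]

lemma two_mul_four_mul_add_one_add_one (h : IsRudinShapiro r) (n : ℕ) :
    r (2 * (4 * n + 1) + 1) = -r n := by
  rw [show 2 * (4 * n + 1) + 1 = 4 * (2 * n) + 3 by ring, h.four_mul_add_three,
    show 2 * (2 * n) + 1 = 4 * n + 1 by ring, h.four_mul_add_one]

lemma two_mul_four_mul_add_two_add_one (h : IsRudinShapiro r) (n : ℕ) :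
    r (2 * (4 * n + 2) + 1) = r (2 * n + 1) := by
  rw [show 2 * (4 * n + 2) + 1 = 4 * (2 * n + 1) + 1 by ring, h.four_mul_add_one]

lemma two_mul_four_mul_add_three_add_one (h : IsRudinShapiro r) (n : ℕ) :
    r (2 * (4 * n + 3) + 1) = r (2 * n + 1) := by
  rw [show 2 * (4 * n + 3) + 1 = 4 * (2 * n + 1) + 3 by ring, h.four_mul_add_three,
    show 2 * (2 * n + 1) + 1 = 4 * n + 3 by ring, h.four_mul_add_three, neg_neg]

lemma six_mul_two_pow_add (h : IsRudinShapiro r) {k x : ℕ} (hx : x < 2 ^ k) :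
    r (6 * 2 ^ k + x) = -r x := by
  induction k generalizing x with
  | zero =>
    obtain rfl : x = 0 := by simpa using hx
    have h₆ : r 6 = r 3 := h.four_mul_add_two 1
    have h₃ : r 3 = -r 1 := h.four_mul_add_three 0
    have h₁ : r 1 = r 0 := h.four_mul_add_one 0
    rw [pow_zero, mul_one, add_zero, h₆, h₃, h₁]
  | succ k ih =>
    rw [pow_succ] at hx ⊢
    rcases x.even_or_odd' with ⟨y, rfl | rfl⟩
    · rw [show 6 * (2 ^ k * 2) + 2 * y = 2 * (6 * 2 ^ k + y) by ring, h.two_mul, h.two_mul,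
        ih (by omega)]
    · have hsign : (-1 : ℤ) ^ (6 * 2 ^ k + y) = (-1) ^ y := by
        rw [pow_add, Even.neg_one_pow ⟨3 * 2 ^ k, by ring⟩, one_mul]
      rw [show 6 * (2 ^ k * 2) + (2 * y + 1) = 2 * (6 * 2 ^ k + y) + 1 by ring,
        h.two_mul_add_one, h.two_mul_add_one, ih (by omega), hsign, mul_neg]

lemma exists_factorSum_eq_neg (h : IsRudinShapiro r) (n i : ℕ) :
    ∃ j, factorSum r n j = -factorSum r n i := by
  refine ⟨6 * 2 ^ (i + n) + i, ?_⟩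
  rw [factorSum, factorSum, ← Finset.sum_neg_distrib]
  refine Finset.sum_congr rfl fun j hj => ?_
  have hlt : i + j < 2 ^ (i + n) :=
    (Nat.add_lt_add_left (Finset.mem_range.mp hj) i).trans Nat.lt_two_pow_self
  rw [add_assoc, h.six_mul_two_pow_add hlt]

theorem abelianComplexity_eq_add_one (h : IsRudinShapiro r) {n : ℕ} {v : ℤ}
    (hv : IsGreatest (Set.range (factorSum r n)) v) : (abelianComplexity r n : ℤ) = v + 1 := by
  have hneg : IsLeast (Set.range (factorSum r n)) (-v) := by
    obtain ⟨⟨i, rfl⟩, hle⟩ := hv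
    refine ⟨h.exists_factorSum_eq_neg n i, Set.forall_mem_range.mpr fun j => ?_⟩
    obtain ⟨k, hk⟩ := h.exists_factorSum_eq_neg n j
    have := hle ⟨k, hk⟩
    omega
  have := two_mul_abelianComplexity h.eq_one_or_neg_one hv hneg
  omega

lemma partialSum_four_mul (h : IsRudinShapiro r) (n : ℕ) :
    partialSum r (4 * n) = 2 * partialSum r n := by
  induction n with
  | zero => rfl
  | succ n ih =>
    rw [show 4 * (n + 1) = 4 * n + 3 + 1 by ring]
    simp only [partialSum_succ, ih, h.four_mul, h.four_mul_add_one, h.four_mul_add_two,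
      h.four_mul_add_three]
    ring

lemma partialSum_four_mul_add_one (h : IsRudinShapiro r) (n : ℕ) :
    partialSum r (4 * n + 1) = 2 * partialSum r n + r n := by
  rw [partialSum_succ, h.partialSum_four_mul, h.four_mul]

lemma partialSum_four_mul_add_two (h : IsRudinShapiro r) (n : ℕ) :
    partialSum r (4 * n + 2) = 2 * partialSum r (n + 1) := by
  rw [partialSum_succ, h.partialSum_four_mul_add_one, h.four_mul_add_one, partialSum_succ]
  ring

lemma partialSum_four_mul_add_three (h : IsRudinShapiro r) (n : ℕ) :
    partialSum r (4 * n + 3) = 2 * partialSum r (n + 1) + r (2 * n + 1) := by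
  rw [partialSum_succ, h.partialSum_four_mul_add_two, h.four_mul_add_two]

lemma partialSum_four_mul_add_four (h : IsRudinShapiro r) (n : ℕ) :
    partialSum r (4 * n + 4) = 2 * partialSum r (n + 1) :=
  h.partialSum_four_mul (n + 1)

lemma factorSum_four_mul_two_mul (h : IsRudinShapiro r) (n i : ℕ) :
    factorSum r (4 * n) (2 * i) = 2 * factorSum r n ((i + 1) / 2) := by
  have hpartial (k : ℕ) : partialSum r (2 * k) = 2 * partialSum r ((k + 1) / 2) := by
    rcases k.even_or_odd' with ⟨m, rfl | rfl⟩
    · rw [show 2 * (2 * m) = 4 * m by ring, show (2 * m + 1) / 2 = m by omega,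
        h.partialSum_four_mul]
    · rw [show 2 * (2 * m + 1) = 4 * m + 2 by ring, show (2 * m + 1 + 1) / 2 = m + 1 by omega,
        h.partialSum_four_mul_add_two]
  rw [factorSum_eq_sub, factorSum_eq_sub, show 2 * i + 4 * n = 2 * (i + 2 * n) by ring,
    hpartial, hpartial, show (i + 2 * n + 1) / 2 = (i + 1) / 2 + n by omega, mul_sub]

section UpperBounds

variable {n : ℕ} {v : ℤ}

/-- A factor of length `4 * n + 1` is an even-aligned factor of length `4 * n` and one letter. -/
lemma factorSum_four_mul_add_one_le (h : IsRudinShapiro r) (hv : ∀ i, factorSum r n i ≤ v) (i : ℕ) :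
    factorSum r (4 * n + 1) i ≤ 2 * v + 1 := by
  rcases i.even_or_odd' with ⟨k, rfl | rfl⟩
  · rw [factorSum_succ, h.factorSum_four_mul_two_mul]
    have := hv ((k + 1) / 2)
    have := h.eq_one_or_neg_one (2 * k + 4 * n)
    omega
  · rw [factorSum_succ', show 2 * k + 1 + 1 = 2 * (k + 1) by ring, h.factorSum_four_mul_two_mul]
    have := hv ((k + 1 + 1) / 2)
    have := h.eq_one_or_neg_one (2 * k + 1)
    omega

/-- A factor of length `4 * n + 3` is an even-aligned factor of length `4 * n + 4` without one of
its end letters. -/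
lemma factorSum_four_mul_add_three_le (h : IsRudinShapiro r) (hv : ∀ i, factorSum r (n + 1) i ≤ v)
    (i : ℕ) : factorSum r (4 * n + 3) i ≤ 2 * v + 1 := by
  rcases i.even_or_odd' with ⟨k, rfl | rfl⟩
  · have := (factorSum_succ r (4 * n + 3) (2 * k)).symm.trans
      (h.factorSum_four_mul_two_mul (n + 1) k)
    have := hv ((k + 1) / 2)
    have := h.eq_one_or_neg_one (2 * k + (4 * n + 3))
    omega
  · have := (factorSum_succ' r (4 * n + 3) (2 * k)).symm.trans
      (h.factorSum_four_mul_two_mul (n + 1) k)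
    have := hv ((k + 1) / 2)
    have := h.eq_one_or_neg_one (2 * k)
    omega

lemma factorSum_four_mul_le (h : IsRudinShapiro r) (hv : ∀ i, factorSum r n i ≤ v) (i : ℕ) :
    factorSum r (4 * n) i ≤ 2 * v + 2 := by
  have := factorSum_le_succ_add_one h.eq_one_or_neg_one (4 * n) i
  have := h.factorSum_four_mul_add_one_le hv i
  omega

lemma factorSum_four_mul_add_two_le_of_left (h : IsRudinShapiro r) (hv : ∀ i, factorSum r n i ≤ v)
    (i : ℕ) : factorSum r (4 * n + 2) i ≤ 2 * v + 2 := by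
  have : factorSum r (4 * n + 2) i ≤ factorSum r (4 * n + 1) i + 1 :=
    factorSum_succ_le_add_one h.eq_one_or_neg_one (4 * n + 1) i
  have := h.factorSum_four_mul_add_one_le hv i
  omega

lemma factorSum_four_mul_add_two_le_of_right (h : IsRudinShapiro r)
    (hv : ∀ i, factorSum r (n + 1) i ≤ v) (i : ℕ) : factorSum r (4 * n + 2) i ≤ 2 * v + 2 := by
  have : factorSum r (4 * n + 2) i ≤ factorSum r (4 * n + 3) i + 1 :=
    factorSum_le_succ_add_one h.eq_one_or_neg_one (4 * n + 2) i
  have := h.factorSum_four_mul_add_three_le hv i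
  omega

end UpperBounds

section Lifting

variable {n : ℕ} {v : ℤ}

lemma isLiftable_four_mul (h : IsRudinShapiro r) (hv : IsLiftable r n v) :
    IsLiftable r (4 * n) (2 * v + 2) := by
  obtain ⟨a, b, hab, hv, ha, hb⟩ := hv
  refine ⟨4 * a + 2, 4 * b + 2, by omega, ?_, ?_, ?_⟩
  · rw [h.partialSum_four_mul_add_three, h.partialSum_four_mul_add_three]
    omega
  · rw [h.two_mul_four_mul_add_two_add_one, ha]
  · rw [h.two_mul_four_mul_add_two_add_one, hb]

lemma isLiftable_four_mul_add_one (h : IsRudinShapiro r) (hv : IsLiftable r n v) :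
    IsLiftable r (4 * n + 1) (2 * v + 1) := by
  obtain ⟨a, b, hab, hv, ha, hb⟩ := hv
  refine ⟨4 * a + 2, 4 * b + 3, by omega, ?_, ?_, ?_⟩
  · rw [h.partialSum_four_mul_add_three, h.partialSum_four_mul_add_four]
    omega
  · rw [h.two_mul_four_mul_add_two_add_one, ha]
  · rw [h.two_mul_four_mul_add_three_add_one, hb]

lemma isLiftable_four_mul_add_three (h : IsRudinShapiro r) (hv : IsLiftable r (n + 1) v) :
    IsLiftable r (4 * n + 3) (2 * v + 1) := by
  obtain ⟨a, b, hab, hv, ha, hb⟩ := hv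
  refine ⟨4 * a + 3, 4 * b + 2, by omega, ?_, ?_, ?_⟩
  · rw [h.partialSum_four_mul_add_three, h.partialSum_four_mul_add_four]
    omega
  · rw [h.two_mul_four_mul_add_three_add_one, ha]
  · rw [h.two_mul_four_mul_add_two_add_one, hb]

lemma isLiftable_four_mul_add_two_of_left (h : IsRudinShapiro r) (hv : IsLiftable r n v) :
    IsLiftable r (4 * n + 2) (2 * v) := by
  obtain ⟨a, b, hab, hv, ha, hb⟩ := hv
  rcases h.eq_one_or_neg_one a with hra | hra
  · refine ⟨4 * a + 1, 4 * b + 3, by omega, ?_, ?_, ?_⟩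
    · rw [h.partialSum_four_mul_add_two, h.partialSum_four_mul_add_four]
      omega
    · rw [h.two_mul_four_mul_add_one_add_one, hra]
    · rw [h.two_mul_four_mul_add_three_add_one, hb]
  · refine ⟨4 * a, 4 * b + 2, by omega, ?_, ?_, ?_⟩
    · rw [h.partialSum_four_mul_add_one, h.partialSum_four_mul_add_three]
      rw [partialSum_succ r a] at hv
      omega
    · rw [h.two_mul_four_mul_add_one, hra]
    · rw [h.two_mul_four_mul_add_two_add_one, hb]

lemma isLiftable_four_mul_add_two_of_right (h : IsRudinShapiro r) (hv : IsLiftable r (n + 1) v) :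
    IsLiftable r (4 * n + 2) (2 * v) := by
  obtain ⟨a, b, hab, hv, ha, hb⟩ := hv
  rcases h.eq_one_or_neg_one b with hrb | hrb
  · refine ⟨4 * a + 2, 4 * b, by omega, ?_, ?_, ?_⟩
    · rw [h.partialSum_four_mul_add_one, h.partialSum_four_mul_add_three]
      rw [partialSum_succ r b] at hv
      omega
    · rw [h.two_mul_four_mul_add_two_add_one, ha]
    · rw [h.two_mul_four_mul_add_one, hrb]
  · refine ⟨4 * a + 3, 4 * b + 1, by omega, ?_, ?_, ?_⟩
    · rw [h.partialSum_four_mul_add_two, h.partialSum_four_mul_add_four]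
      omega
    · rw [h.two_mul_four_mul_add_three_add_one, ha]
    · rw [h.two_mul_four_mul_add_one_add_one, hrb, neg_neg]

end Lifting

section Maxima

variable {n : ℕ} {v v' : ℤ}

lemma isLiftableMax_four_mul (h : IsRudinShapiro r) (hv : IsLiftableMax r n v) :
    IsLiftableMax r (4 * n) (2 * v + 2) :=
  ⟨h.factorSum_four_mul_le hv.factorSum_le, h.isLiftable_four_mul hv.isLiftable⟩

lemma isLiftableMax_four_mul_add_one (h : IsRudinShapiro r) (hv : IsLiftableMax r n v) :
    IsLiftableMax r (4 * n + 1) (2 * v + 1) :=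
  ⟨h.factorSum_four_mul_add_one_le hv.factorSum_le, h.isLiftable_four_mul_add_one hv.isLiftable⟩

lemma isLiftableMax_four_mul_add_three (h : IsRudinShapiro r) (hv : IsLiftableMax r (n + 1) v) :
    IsLiftableMax r (4 * n + 3) (2 * v + 1) :=
  ⟨h.factorSum_four_mul_add_three_le hv.factorSum_le,
    h.isLiftable_four_mul_add_three hv.isLiftable⟩

lemma eq_add_one_or_eq_sub_one_of_isLiftableMax (h : IsRudinShapiro r) (hv : IsLiftableMax r n v)
    (hv' : IsLiftableMax r (n + 1) v') : v' = v + 1 ∨ v' = v - 1 := by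
  obtain ⟨i, hi⟩ := hv.isLiftable.exists_factorSum_eq
  obtain ⟨j, hj⟩ := hv'.isLiftable.exists_factorSum_eq
  have := factorSum_le_succ_add_one h.eq_one_or_neg_one n i
  have := hv'.factorSum_le i
  have := factorSum_succ_le_add_one h.eq_one_or_neg_one n j
  have := hv.factorSum_le j
  have := factorSum_add_length h.eq_one_or_neg_one n i
  have := factorSum_add_length h.eq_one_or_neg_one (n + 1) j
  omega

/-- The larger of the two maxima gives the attained value and the smaller one the upper bound. -/
lemma isLiftableMax_four_mul_add_two (h : IsRudinShapiro r) (hv : IsLiftableMax r n v)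
    (hv' : IsLiftableMax r (n + 1) v') : IsLiftableMax r (4 * n + 2) (v + v' + 1) := by
  rcases h.eq_add_one_or_eq_sub_one_of_isLiftableMax hv hv' with rfl | rfl
  · rw [show v + (v + 1) + 1 = 2 * (v + 1) by ring]
    refine ⟨fun i => ?_, h.isLiftable_four_mul_add_two_of_right hv'.isLiftable⟩
    exact (h.factorSum_four_mul_add_two_le_of_left hv.factorSum_le i).trans_eq (by ring)
  · rw [show v + (v - 1) + 1 = 2 * v by ring]
    refine ⟨fun i => ?_, h.isLiftable_four_mul_add_two_of_left hv.isLiftable⟩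
    exact (h.factorSum_four_mul_add_two_le_of_right hv'.factorSum_le i).trans_eq (by ring)

lemma isLiftableMax_one (h : IsRudinShapiro r) : IsLiftableMax r 1 1 := by
  have h₁ : r 1 = 1 := (h.four_mul_add_one 0).trans h.zero
  have h₂ : r 2 = 1 := (h.four_mul_add_two 0).trans h₁
  have h₃ : r 3 = -1 := by rw [h.four_mul_add_three 0, h₁]
  have h₅ : r 5 = 1 := (h.four_mul_add_one 1).trans h₁
  refine ⟨fun i => (abs_le.mp (abs_factorSum_le h.eq_one_or_neg_one 1 i)).2, 1, 2, rfl, ?_, h₃, h₅⟩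
  rw [partialSum_succ, add_sub_cancel_left, h₂]

lemma isLiftableMax_two (h : IsRudinShapiro r) : IsLiftableMax r 2 2 :=
  ⟨fun i => (abs_le.mp (abs_factorSum_le h.eq_one_or_neg_one 2 i)).2,
    h.isLiftable_four_mul_add_two_of_right (n := 0) h.isLiftableMax_one.isLiftable⟩

lemma exists_isLiftableMax (h : IsRudinShapiro r) (hn : 0 < n) : ∃ v, IsLiftableMax r n v := by
  induction n using Nat.strong_induction_on with
  | _ n ih =>
    obtain rfl | rfl | h₃ : n = 1 ∨ n = 2 ∨ 3 ≤ n := by omega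
    · exact ⟨1, h.isLiftableMax_one⟩
    · exact ⟨2, h.isLiftableMax_two⟩
    obtain ⟨m, rfl | rfl | rfl | rfl⟩ :
        ∃ m, n = 4 * m ∨ n = 4 * m + 1 ∨ n = 4 * m + 2 ∨ n = 4 * m + 3 := ⟨n / 4, by omega⟩
    · obtain ⟨v, hv⟩ := ih m (by omega) (by omega)
      exact ⟨_, h.isLiftableMax_four_mul hv⟩
    · obtain ⟨v, hv⟩ := ih m (by omega) (by omega)
      exact ⟨_, h.isLiftableMax_four_mul_add_one hv⟩
    · obtain ⟨v, hv⟩ := ih m (by omega) (by omega)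
      obtain ⟨v', hv'⟩ := ih (m + 1) (by omega) (by omega)
      exact ⟨_, h.isLiftableMax_four_mul_add_two hv hv'⟩
    · obtain ⟨v', hv'⟩ := ih (m + 1) (by omega) (by omega)
      exact ⟨_, h.isLiftableMax_four_mul_add_three hv'⟩

end Maxima

theorem abelianComplexity_four_mul (h : IsRudinShapiro r) {n : ℕ} (hn : 0 < n) :
    (abelianComplexity r (4 * n) : ℤ) = 2 * abelianComplexity r n + 1 := by
  obtain ⟨v, hv⟩ := h.exists_isLiftableMax hn
  rw [h.abelianComplexity_eq_add_one hv.isGreatest,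
    h.abelianComplexity_eq_add_one (h.isLiftableMax_four_mul hv).isGreatest]
  ring

theorem abelianComplexity_four_mul_add_one (h : IsRudinShapiro r) (n : ℕ) :
    (abelianComplexity r (4 * n + 1) : ℤ) = 2 * abelianComplexity r n := by
  rcases n.eq_zero_or_pos with rfl | hn
  · rw [abelianComplexity_zero, h.abelianComplexity_eq_add_one h.isLiftableMax_one.isGreatest]
    rfl
  obtain ⟨v, hv⟩ := h.exists_isLiftableMax hn
  rw [h.abelianComplexity_eq_add_one hv.isGreatest,
    h.abelianComplexity_eq_add_one (h.isLiftableMax_four_mul_add_one hv).isGreatest]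
  ring

theorem abelianComplexity_four_mul_add_two (h : IsRudinShapiro r) (n : ℕ) :
    (abelianComplexity r (4 * n + 2) : ℤ) =
      abelianComplexity r n + abelianComplexity r (n + 1) := by
  rcases n.eq_zero_or_pos with rfl | hn
  · rw [abelianComplexity_zero, h.abelianComplexity_eq_add_one h.isLiftableMax_one.isGreatest,
      h.abelianComplexity_eq_add_one h.isLiftableMax_two.isGreatest]
    rfl
  obtain ⟨v, hv⟩ := h.exists_isLiftableMax hn
  obtain ⟨v', hv'⟩ := h.exists_isLiftableMax n.succ_pos
  rw [h.abelianComplexity_eq_add_one hv.isGreatest, h.abelianComplexity_eq_add_one hv'.isGreatest,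
    h.abelianComplexity_eq_add_one (h.isLiftableMax_four_mul_add_two hv hv').isGreatest]
  ring

theorem abelianComplexity_four_mul_add_three (h : IsRudinShapiro r) (n : ℕ) :
    (abelianComplexity r (4 * n + 3) : ℤ) = 2 * abelianComplexity r (n + 1) := by
  obtain ⟨v, hv⟩ := h.exists_isLiftableMax n.succ_pos
  rw [h.abelianComplexity_eq_add_one hv.isGreatest,
    h.abelianComplexity_eq_add_one (h.isLiftableMax_four_mul_add_three hv).isGreatest]
  ring

end IsRudinShapiro

/-- The abelian complexity function `(ρ(n))ₙ` of the
Rudin–Shapiro sequence (with `ρ(0) = 1`) is 2-regular: the ℤ-submodule of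
the module of all integer sequences generated by its 2-kernel is finitely
generated. -/
theorem abelianComplexity_two_regular
    (r : ℕ → ℤ) (hr0 : r 0 = 1)
    (hre : ∀ n, r (2 * n) = r n)
    (hro : ∀ n, r (2 * n + 1) = (-1) ^ n * r n) :
    (Submodule.span ℤ (kernel2 fun n => (abelianComplexity r n : ℤ))).FG := by
  have h : IsRudinShapiro r := ⟨hr0, hre, hro⟩
  have hrec : QuadrisectionRecurrence fun n => (abelianComplexity r n : ℤ) :=
    { four_mul := fun _ => h.abelianComplexity_four_mul
      four_mul_add_one := h.abelianComplexity_four_mul_add_one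
      four_mul_add_two := h.abelianComplexity_four_mul_add_two
      four_mul_add_three := h.abelianComplexity_four_mul_add_three }
  exact hrec.fg_span_kernel2
end
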